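/- For every ρ ∈ (0, 4], the function f_ρ is differentiable on ℝ and, for every x ∈ [0, 1], f_ρ'(x) = ρx² + (1−ρ)x; consequently, the gradient-descent map with step-size 1 satisfies x − f_ρ'(x) = ρx(1−x) for all x ∈ [0, 1], i.e. it coincides with the logistic map on [0, 1]. -/

import Mathlib

/-- The piecewise function `f_ρ` from the paper's discussion of the logistic map
embedded in gradient descent with step-size 1. -/
noncomputable def frho (ρ : ℝ) (x : ℝ) : ℝ :=
  if |x| ≤ 1 then
    ρ / 3 * |x| ^ 3 + (1 - ρ) / 2 * x ^ 2 + (ρ - 1) ^ 3 / (6 * ρ ^ 2)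
  else if |x| ≤ 3 / 2 then
    -(ρ / 3) * |x| ^ 3 + (1 + 3 * ρ) / 2 * x ^ 2 - 2 * ρ * |x| +
      ((ρ - 1) ^ 3 + 4 * ρ ^ 3) / (6 * ρ ^ 2)
  else
    1 / 2 * x ^ 2 + ρ / 4 * |x| + (4 * (ρ - 1) ^ 3 - 11 * ρ ^ 3) / (24 * ρ ^ 2)

/-!
The function `f_ρ` is an even cubic spline: `f_ρ x = φ |x|`, where `φ` is a cubic polynomial plus
multiples of the truncated powers `(r - 1)₊³` and `(r - 3/2)₊³`, one for each breakpoint. Truncated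
cubes are differentiable, so `φ` is, and `φ' 0 = 0` removes the corner of `|x|` at the origin. On
`[0, 1]` both truncated powers and their derivatives vanish, leaving the derivative of the
polynomial part.
-/

theorem hasDerivAt_comp_abs {F : Type*} [NormedAddCommGroup F] [NormedSpace ℝ F]
    {f : ℝ → F} {f' : F} {x : ℝ} (hf : HasDerivAt f f' |x|) (hf' : x = 0 → f' = 0) :
    HasDerivAt (fun y => f |y|) ((SignType.sign x : ℝ) • f') x := by
  rcases eq_or_ne x 0 with rfl | hx
  · have hlittle : (fun r => f r - f 0) =o[nhds 0] fun r : ℝ => r := by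
      simpa [hasDerivAt_iff_isLittleO, hf' rfl] using hf
    have habs : Filter.Tendsto (fun y : ℝ => |y|) (nhds 0) (nhds 0) := by
      simpa using (continuous_abs (G := ℝ)).tendsto 0
    simpa [hasDerivAt_iff_isLittleO, Function.comp_def] using
      (hlittle.comp_tendsto habs).trans_isBigO (Asymptotics.isBigO_refl _ _).abs_left
  · exact hf.scomp x (hasDerivAt_abs hx)

theorem hasDerivAt_posPart_pow (n : ℕ) (x : ℝ) :
    HasDerivAt (fun y : ℝ => y⁺ ^ (n + 2)) ((n + 2) * x⁺ ^ (n + 1)) x := by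
  rcases lt_trichotomy x 0 with hx | rfl | hx
  · have heq : (fun y : ℝ => y⁺ ^ (n + 2)) =ᶠ[nhds x] fun _ => 0 := by
      filter_upwards [Iio_mem_nhds hx] with y hy
      simp [posPart_eq_zero.2 (Set.mem_Iio.1 hy).le]
    simpa [posPart_eq_zero.2 hx.le] using (hasDerivAt_const x (0 : ℝ)).congr_of_eventuallyEq heq
  · have hbound : (fun y : ℝ => y⁺ ^ (n + 2)) =O[nhds 0] fun y => ‖y - 0‖ ^ (n + 2) := by
      refine Asymptotics.IsBigO.of_norm_le fun y => ?_
      simp only [sub_zero, norm_pow, Real.norm_eq_abs, abs_of_nonneg (posPart_nonneg y)]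
      exact pow_le_pow_left₀ (posPart_nonneg y) (max_le (le_abs_self y) (abs_nonneg y)) _
    simpa using (hbound.hasFDerivAt (𝕜 := ℝ) (by lia)).hasDerivAt
  · have heq : (fun y : ℝ => y⁺ ^ (n + 2)) =ᶠ[nhds x] fun y => y ^ (n + 2) := by
      filter_upwards [Ioi_mem_nhds hx] with y hy
      rw [posPart_eq_self.2 (Set.mem_Ioi.1 hy).le]
    simpa [posPart_eq_self.2 hx.le] using (hasDerivAt_pow (n + 2) x).congr_of_eventuallyEq heq

/-- The radial profile `φ` of `f_ρ`, so that `f_ρ x = φ |x|`, as a cubic spline in the truncated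
power basis, with `(r - c)₊` written as the positive part `(r - c)⁺`. -/
noncomputable def frhoProfile (ρ r : ℝ) : ℝ :=
  ρ / 3 * r ^ 3 + (1 - ρ) / 2 * r ^ 2 + (ρ - 1) ^ 3 / (6 * ρ ^ 2) -
    2 * ρ / 3 * (r - 1)⁺ ^ 3 + ρ / 3 * (r - 3 / 2)⁺ ^ 3

/-- The derivative of the radial profile `frhoProfile ρ`. -/
noncomputable def frhoProfileDeriv (ρ r : ℝ) : ℝ :=
  ρ * r ^ 2 + (1 - ρ) * r - 2 * ρ * (r - 1)⁺ ^ 2 + ρ * (r - 3 / 2)⁺ ^ 2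

theorem frho_eq_frhoProfile_abs {ρ : ℝ} (hρ : ρ ≠ 0) (x : ℝ) :
    frho ρ x = frhoProfile ρ |x| := by
  rw [frho, frhoProfile, ← sq_abs x]
  generalize |x| = r
  split_ifs with h₁ h₂
  · have h₁' : (r - 1)⁺ = 0 := posPart_eq_zero.2 (by linarith)
    have h₂' : (r - 3 / 2)⁺ = 0 := posPart_eq_zero.2 (by linarith)
    rw [h₁', h₂']
    ring
  · have h₁' : (r - 1)⁺ = r - 1 := posPart_eq_self.2 (by linarith)
    have h₂' : (r - 3 / 2)⁺ = 0 := posPart_eq_zero.2 (by linarith)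
    rw [h₁', h₂']
    field_simp
    ring
  · have h₁' : (r - 1)⁺ = r - 1 := posPart_eq_self.2 (by linarith)
    have h₂' : (r - 3 / 2)⁺ = r - 3 / 2 := posPart_eq_self.2 (by linarith)
    rw [h₁', h₂']
    field_simp
    ring

theorem hasDerivAt_frhoProfile (ρ r : ℝ) :
    HasDerivAt (frhoProfile ρ) (frhoProfileDeriv ρ r) r := by
  have hcube (c : ℝ) : HasDerivAt (fun s => (s - c)⁺ ^ 3) (3 * (r - c)⁺ ^ 2) r :=
    ((hasDerivAt_posPart_pow 1 (r - c)).comp_sub_const r c).congr_deriv (by norm_num)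
  have hpoly : HasDerivAt
      (fun s => ρ / 3 * s ^ 3 + (1 - ρ) / 2 * s ^ 2 + (ρ - 1) ^ 3 / (6 * ρ ^ 2))
      (ρ * r ^ 2 + (1 - ρ) * r) r := by
    refine ((((hasDerivAt_pow 3 r).const_mul (ρ / 3)).add
      ((hasDerivAt_pow 2 r).const_mul ((1 - ρ) / 2))).add_const _).congr_deriv ?_
    push_cast
    ring
  refine ((hpoly.sub ((hcube 1).const_mul (2 * ρ / 3))).add
    ((hcube (3 / 2)).const_mul (ρ / 3))).congr_deriv ?_
  rw [frhoProfileDeriv]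
  ring

theorem frhoProfileDeriv_of_le_one (ρ : ℝ) {r : ℝ} (hr : r ≤ 1) :
    frhoProfileDeriv ρ r = ρ * r ^ 2 + (1 - ρ) * r := by
  have h₁ : (r - 1)⁺ = 0 := posPart_eq_zero.2 (by linarith)
  have h₂ : (r - 3 / 2)⁺ = 0 := posPart_eq_zero.2 (by linarith)
  simp [frhoProfileDeriv, h₁, h₂]

theorem hasDerivAt_frho {ρ : ℝ} (hρ : ρ ≠ 0) (x : ℝ) :
    HasDerivAt (frho ρ) (SignType.sign x * frhoProfileDeriv ρ |x|) x := by
  have hzero : x = 0 → frhoProfileDeriv ρ |x| = 0 := by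
    rintro rfl
    simp [frhoProfileDeriv_of_le_one]
  rw [funext (frho_eq_frhoProfile_abs hρ)]
  exact hasDerivAt_comp_abs (hasDerivAt_frhoProfile ρ |x|) hzero

theorem deriv_frho_of_abs_le_one {ρ x : ℝ} (hρ : ρ ≠ 0) (hx : |x| ≤ 1) :
    deriv (frho ρ) x = ρ * (x * |x|) + (1 - ρ) * x := by
  rw [(hasDerivAt_frho hρ x).deriv, frhoProfileDeriv_of_le_one ρ hx]
  linear_combination (ρ * |x| + (1 - ρ)) * sign_mul_abs x

theorem frho_deriv_logistic_general {ρ : ℝ} (hρ : ρ ≠ 0) :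
    Differentiable ℝ (frho ρ) ∧
      ∀ x ∈ Set.Icc (0 : ℝ) 1,
        deriv (frho ρ) x = ρ * x ^ 2 + (1 - ρ) * x ∧
          x - deriv (frho ρ) x = ρ * x * (1 - x) := by
  refine ⟨fun x => (hasDerivAt_frho hρ x).differentiableAt, fun x ⟨hx₀, hx₁⟩ => ?_⟩
  have hderiv : deriv (frho ρ) x = ρ * x ^ 2 + (1 - ρ) * x := by
    rw [deriv_frho_of_abs_le_one hρ (abs_le.2 ⟨by linarith, hx₁⟩), abs_of_nonneg hx₀, sq]
  exact ⟨hderiv, by rw [hderiv]; ring⟩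

/-- For every `ρ ∈ (0, 4]`, `f_ρ` is differentiable and on
`[0, 1]` its derivative is `ρ x² + (1 - ρ) x`; hence the gradient-descent map
with step-size 1 coincides with the logistic map `x ↦ ρ x (1 - x)` on `[0, 1]`. -/
theorem frho_deriv_logistic (ρ : ℝ) (hρ : ρ ∈ Set.Ioc (0 : ℝ) 4) :
    Differentiable ℝ (frho ρ) ∧
      ∀ x ∈ Set.Icc (0 : ℝ) 1,
        deriv (frho ρ) x = ρ * x ^ 2 + (1 - ρ) * x ∧
          x - deriv (frho ρ) x = ρ * x * (1 - x) :=
  frho_deriv_logistic_general hρ.1.ne'
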